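/- Let (G, S) be a noncommutative S-simple group with triality, S = ⟨σ, ρ⟩ with σ^2 = ρ^3 = (σρ)^2 = 1. Then either G is a simple group, or G = A × A × A for a simple group A, with the triality automorphisms acting by (a, b, c)^ρ = (c, a, b) and (a, b, c)^σ = (a, c, b). -/

import Mathlib

open Matrix

/-! Groups with triality (Doro). -/

/-- `(G, S)` is a group with triality: `S = ⟨σ, ρ | σ² = ρ³ = (σρ)² = 1⟩ ≅ S₃` is a
group of automorphisms of `G` and the triality identity
`[g,σ]·[g,σ]^ρ·[g,σ]^{ρ²} = 1` holds for all `g ∈ G`, where `[g,σ] = g⁻¹·g^σ`. -/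
structure IsGroupWithTriality (G : Type*) [Group G] (σ ρ : MulAut G) : Prop where
  sigma_sq : σ ^ 2 = 1
  rho_cube : ρ ^ 3 = 1
  sigma_rho_sq : (σ * ρ) ^ 2 = 1
  sigma_ne_one : σ ≠ 1
  rho_ne_one : ρ ≠ 1
  triality : ∀ g : G, (g⁻¹ * σ g) * ρ (g⁻¹ * σ g) * ρ (ρ (g⁻¹ * σ g)) = 1

/-- A group with triality is `S`-simple if it has no proper nontrivial `S`-invariant
normal subgroup. -/
def IsSTrialitySimple (G : Type*) [Group G] (σ ρ : MulAut G) : Prop :=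
  ∀ N : Subgroup G, N.Normal → (∀ n ∈ N, σ n ∈ N) → (∀ n ∈ N, ρ n ∈ N) →
    N = ⊥ ∨ N = ⊤

namespace TrialityAux

theorem gen {G : Type*} [Group G] {σ ρ : MulAut G} (hss : IsSTrialitySimple G σ ρ)
    (s : ∀ x, σ (σ x) = x) (r : ∀ x, ρ (ρ (ρ x)) = x)
    (sr : ∀ x, σ (ρ x) = ρ (ρ (σ x))) (srr : ∀ x, σ (ρ (ρ x)) = ρ (σ x))
    (N : Subgroup G) (hN : N.Normal) (hne : N ≠ ⊥) (C : Subgroup G)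
    (h : ∀ n ∈ N, n ∈ C ∧ ρ n ∈ C ∧ ρ (ρ n) ∈ C ∧ σ n ∈ C ∧ ρ (σ n) ∈ C ∧ ρ (ρ (σ n)) ∈ C) :
    C = ⊤ := by
  let W : Set G := {x | ∃ n ∈ N, x = n ∨ x = ρ n ∨ x = ρ (ρ n) ∨ x = σ n ∨ x = ρ (σ n) ∨
    x = ρ (ρ (σ n))}
  have hWC : Subgroup.closure W ≤ C := by
    rw [Subgroup.closure_le]
    rintro x ⟨n, hn, h'⟩
    obtain ⟨h1, h2, h3, h4, h5, h6⟩ := h n hn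
    rcases h' with h' | h' | h' | h' | h' | h' <;> rw [h'] <;> assumption
  have hWn : (Subgroup.closure W).Normal := by
    refine ⟨fun n hn g => ?_⟩
    have : Subgroup.closure W ≤ (Subgroup.closure W).comap (MulAut.conj g).toMonoidHom := by
      rw [Subgroup.closure_le]
      rintro x ⟨n, hn, h'⟩
      apply Subgroup.subset_closure
      rcases h' with h' | h' | h' | h' | h' | h' <;> subst h'
      · exact ⟨g * x * g⁻¹, hN.conj_mem _ hn g, by simp⟩
      · exact ⟨_, hN.conj_mem _ hn (ρ (ρ g)), by simp [r]⟩
      · exact ⟨_, hN.conj_mem _ hn (ρ g), by simp [r]⟩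
      · exact ⟨_, hN.conj_mem _ hn (σ g), by simp [s]⟩
      · exact ⟨_, hN.conj_mem _ hn (σ (ρ (ρ g))), by simp [r, s]⟩
      · exact ⟨_, hN.conj_mem _ hn (σ (ρ g)), by simp [r, s]⟩
    exact this hn
  have hWs : ∀ n ∈ Subgroup.closure W, σ n ∈ Subgroup.closure W := by
    have : Subgroup.closure W ≤ (Subgroup.closure W).comap σ.toMonoidHom := by
      rw [Subgroup.closure_le]
      rintro x ⟨n, hn, h'⟩
      apply Subgroup.subset_closure
      refine ⟨n, hn, ?_⟩
      rcases h' with h' | h' | h' | h' | h' | h' <;> subst h' <;> simp [s, sr, r]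
    exact fun n hn => this hn
  have hWr : ∀ n ∈ Subgroup.closure W, ρ n ∈ Subgroup.closure W := by
    have : Subgroup.closure W ≤ (Subgroup.closure W).comap ρ.toMonoidHom := by
      rw [Subgroup.closure_le]
      rintro x ⟨n, hn, h'⟩
      apply Subgroup.subset_closure
      refine ⟨n, hn, ?_⟩
      rcases h' with h' | h' | h' | h' | h' | h' <;> subst h' <;> simp [r]
    exact fun n hn => this hn
  rcases hss _ hWn hWs hWr with h0 | h0
  · exfalso
    apply hne
    rw [eq_bot_iff, ← h0]
    exact fun n hn => Subgroup.subset_closure ⟨n, hn, Or.inl rfl⟩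
  · rw [eq_top_iff, ← h0]; exact hWC

theorem center_bot {G : Type*} [Group G] {σ ρ : MulAut G} (hss : IsSTrialitySimple G σ ρ)
    (s : ∀ x, σ (σ x) = x) (r : ∀ x, ρ (ρ (ρ x)) = x)
    (hnc : ∃ x y : G, x * y ≠ y * x) (z : G) (hz : ∀ g, z * g = g * z) : z = 1 := by
  have h := hss (Subgroup.center G) inferInstance
    (fun n hn => by
      rw [Subgroup.mem_center_iff] at *
      intro g; simpa [s] using congrArg σ (hn (σ g)))
    (fun n hn => by
      rw [Subgroup.mem_center_iff] at *
      intro g; simpa [r] using congrArg ρ (hn (ρ (ρ g))))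
  rcases h with h | h
  · have : z ∈ Subgroup.center G := Subgroup.mem_center_iff.2 fun g => (hz g).symm
    rw [h] at this; simpa using this
  · obtain ⟨x, y, hxy⟩ := hnc
    have : y ∈ Subgroup.center G := by rw [h]; trivial
    exact absurd (Subgroup.mem_center_iff.1 this x) hxy

theorem comm_bot {G : Type*} [Group G] {σ ρ : MulAut G} (hss : IsSTrialitySimple G σ ρ)
    (s : ∀ x, σ (σ x) = x) (r : ∀ x, ρ (ρ (ρ x)) = x)
    (sr : ∀ x, σ (ρ x) = ρ (ρ (σ x))) (srr : ∀ x, σ (ρ (ρ x)) = ρ (σ x))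
    (hnc : ∃ x y : G, x * y ≠ y * x)
    (N : Subgroup G) (hN : N.Normal) (hne : N ≠ ⊥) (z : G)
    (h : ∀ n ∈ N, Commute z n ∧ Commute z (ρ n) ∧ Commute z (ρ (ρ n)) ∧ Commute z (σ n) ∧
      Commute z (ρ (σ n)) ∧ Commute z (ρ (ρ (σ n)))) : z = 1 := by
  have := gen hss s r sr srr N hN hne (Subgroup.centralizer {z}) (by
    simpa [Subgroup.mem_centralizer_singleton_iff, Commute, SemiconjBy, eq_comm] using h)
  refine center_bot hss s r hnc z fun g => ?_
  have hg : g ∈ Subgroup.centralizer {z} := by rw [this]; trivial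
  rw [Subgroup.mem_centralizer_singleton_iff] at hg
  exact hg.symm

theorem split_comm {G : Type*} [Group G] {ρ : MulAut G} (I : Subgroup G)
    (hI : ∀ x ∈ I, ρ (ρ x) * ρ x * x = 1) (x y : G) (hx : x ∈ I) (hy : y ∈ I) :
    Commute x (y * ρ x * y⁻¹) := by
  have key : ∀ x ∈ I, ((ρ (ρ y))⁻¹ * ρ (ρ x) * ρ (ρ y)) * (y * ρ x * y⁻¹) * x = 1 := by
    intro x hx
    have h1 := hI _ (I.mul_mem (I.inv_mem hy) hx)
    have h2 := hI _ (I.inv_mem hy)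
    simp only [map_mul, map_inv] at h1 h2
    have h3 : (ρ y)⁻¹ = ρ (ρ y) * y := by
      have := h2
      rw [mul_assoc, inv_mul_eq_one] at this
      rw [this]; group
    rw [h3] at h1
    rw [← h1]; group
  have k1 := key x hx
  have k2 := key _ (I.inv_mem hx)
  set b := y * ρ x * y⁻¹ with hb
  set c := (ρ (ρ y))⁻¹ * ρ (ρ x) * ρ (ρ y) with hc
  have k3 : c⁻¹ * b⁻¹ * x⁻¹ = 1 := by
    rw [← k2, hb, hc]; simp only [map_inv]; group
  have e1 : x = b⁻¹ * c⁻¹ := by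
    rw [← _root_.mul_inv_rev]; exact (inv_eq_of_mul_eq_one_right k1).symm
  have e2 : x = c⁻¹ * b⁻¹ := by
    exact (mul_inv_eq_one.1 k3).symm
  show x * b = b * x
  conv_lhs => rw [e2]
  conv_rhs => rw [e1]
  group

theorem disj_comm {G : Type*} [Group G] (A B : Subgroup G) (hA : A.Normal) (hB : B.Normal)
    (h : ∀ x ∈ A, x ∈ B → x = 1) (a b : G) (ha : a ∈ A) (hb : b ∈ B) : Commute a b :=
  Subgroup.commute_of_normal_of_disjoint A B hA hB
    (Subgroup.disjoint_def.2 fun {x} hx hy => h x hx hy) a b ha hb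

theorem two {G : Type*} [Group G] {σ ρ : MulAut G} (hss : IsSTrialitySimple G σ ρ)
    (s : ∀ x, σ (σ x) = x) (r : ∀ x, ρ (ρ (ρ x)) = x)
    (sr : ∀ x, σ (ρ x) = ρ (ρ (σ x))) (srr : ∀ x, σ (ρ (ρ x)) = ρ (σ x))
    (hnc : ∃ x y : G, x * y ≠ y * x)
    (ht : ∀ g : G, (g⁻¹ * σ g) * ρ (g⁻¹ * σ g) * ρ (ρ (g⁻¹ * σ g)) = 1)
    (I : Subgroup G) (hI : I.Normal) (hr : ∀ x ∈ I, ρ x ∈ I)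
    (hd : ∀ x ∈ I, σ x ∈ I → x = 1) (x : G) (hx : x ∈ I) : x = 1 := by
  by_contra hx1
  have hIc : (I.comap σ.toMonoidHom).Normal := inferInstance
  have hcomm : ∀ a b, a ∈ I → b ∈ I → Commute a (σ b) := by
    intro a b ha hb
    exact disj_comm I (I.comap σ.toMonoidHom) hI hIc (fun x hx h => hd x hx h) a (σ b) ha
      (by simpa [s] using hb)
  have hsplit : ∀ g ∈ I, ρ (ρ g) * ρ g * g = 1 := by
    intro g hg
    have h1 := ht g
    have hg1 := hr g hg
    have hg2 := hr _ hg1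
    have c1 : Commute (ρ g)⁻¹ (σ g) := (hcomm _ _ hg1 hg).inv_left
    have c2 : Commute (ρ (ρ g))⁻¹ (σ g * ρ (σ g)) := by
      apply Commute.inv_left
      apply Commute.mul_right (hcomm _ _ hg2 hg)
      rw [← srr]; exact hcomm _ _ hg2 hg2
    simp only [map_mul, map_inv] at h1
    have h2 : (g⁻¹ * (ρ g)⁻¹ * (ρ (ρ g))⁻¹) * (σ g * ρ (σ g) * ρ (ρ (σ g))) = 1 := by
      rw [← h1]
      calc _ = g⁻¹ * (ρ g)⁻¹ * ((ρ (ρ g))⁻¹ * (σ g * ρ (σ g))) * ρ (ρ (σ g)) := by group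
        _ = g⁻¹ * ((ρ g)⁻¹ * σ g) * ρ (σ g) * (ρ (ρ g))⁻¹ * ρ (ρ (σ g)) := by rw [c2.eq]; group
        _ = _ := by rw [c1.eq]; group
    have h3 : g⁻¹ * (ρ g)⁻¹ * (ρ (ρ g))⁻¹ = 1 := by
      apply hd
      · exact I.mul_mem (I.mul_mem (I.inv_mem hg) (I.inv_mem hg1)) (I.inv_mem hg2)
      · rw [mul_eq_one_iff_eq_inv.1 h2]
        simp only [map_mul, map_inv, s, sr, srr, r]
        apply I.inv_mem
        exact I.mul_mem (I.mul_mem hg hg2) (by simpa [r] using hg1)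
    have := congrArg (·⁻¹) h3
    simpa [mul_assoc] using this
  have hne : I ≠ ⊥ := fun h => hx1 (by rw [h] at hx; simpa using hx)
  have htop : I ⊔ I.comap σ.toMonoidHom = ⊤ := by
    refine gen hss s r sr srr I hI hne _ fun n hn => ?_
    have hl : ∀ n ∈ I, n ∈ I ⊔ I.comap σ.toMonoidHom := fun n hn => Subgroup.mem_sup_left hn
    have hrr : ∀ n ∈ I, σ n ∈ I ⊔ I.comap σ.toMonoidHom :=
      fun n hn => Subgroup.mem_sup_right (by simpa [s] using hn)
    refine ⟨hl _ hn, hl _ (hr _ hn), hl _ (hr _ (hr _ hn)), hrr _ hn, ?_, ?_⟩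
    · rw [← srr]; exact hrr _ (hr _ (hr _ hn))
    · rw [← sr]; exact hrr _ (hr _ hn)
  have hall : ∀ x ∈ I, ∀ y, Commute x (y * ρ x * y⁻¹) := by
    intro x hx y
    have hy : y ∈ I ⊔ I.comap σ.toMonoidHom := by rw [htop]; trivial
    obtain ⟨a, ha, b, hb, rfl⟩ := Subgroup.mem_sup_of_normal_right.1 hy
    have hb' : Commute (ρ x) b := by
      simpa [s] using hcomm _ (σ b) (hr _ hx) hb
    have : a * b * ρ x * (a * b)⁻¹ = a * ρ x * a⁻¹ := by
      calc _ = a * (b * ρ x) * b⁻¹ * a⁻¹ := by group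
        _ = _ := by rw [← hb'.eq]; group
    rw [this]
    exact split_comm I hsplit x a hx ha
  have hall2 : ∀ y, Commute x (y * ρ (ρ x) * y⁻¹) := by
    intro y
    have h := hall _ (hr _ (hr _ hx)) y⁻¹
    rw [r] at h
    have h2 := h.map (MulAut.conj y)
    have h3 : (MulAut.conj y) (y⁻¹ * x * y⁻¹⁻¹) = x := by simp [mul_assoc]
    rw [h3] at h2
    simpa using h2.symm
  have hall0 : ∀ y, Commute x (y * x * y⁻¹) := by
    intro y
    have e : y * x * y⁻¹ = ((y * ρ (ρ x) * y⁻¹) * (y * ρ x * y⁻¹))⁻¹ := by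
      have : x = (ρ (ρ x) * ρ x)⁻¹ := (inv_eq_of_mul_eq_one_right (hsplit x hx)).symm
      conv_lhs => rw [this]
      group
    rw [e]
    exact ((hall2 y).mul_right (hall x hx y)).inv_right
  apply hx1
  have hNI : Subgroup.normalClosure {x} ≤ I := Subgroup.normalClosure_le_normal (by simpa using hx)
  have hcl : ∀ τ : MulAut G, (∀ y, Commute x (y * τ x * y⁻¹)) →
      ∀ n ∈ Subgroup.normalClosure {x}, Commute x (τ n) := by
    intro τ hτ n hn
    have : Subgroup.normalClosure {x} ≤ (Subgroup.centralizer {x}).comap τ.toMonoidHom := by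
      unfold Subgroup.normalClosure
      rw [Subgroup.closure_le]
      intro w hw
      rw [Group.mem_conjugatesOfSet_iff] at hw
      obtain ⟨a, ha, hw⟩ := hw
      rw [Set.mem_singleton_iff] at ha
      subst ha
      obtain ⟨c, rfl⟩ := isConj_iff.1 hw
      have := hτ (τ c)
      simpa [Subgroup.mem_centralizer_singleton_iff] using this.eq.symm
    have := this hn
    rw [Subgroup.mem_comap, Subgroup.mem_centralizer_singleton_iff] at this
    exact this.symm
  refine comm_bot hss s r sr srr hnc (Subgroup.normalClosure {x}) inferInstance ?_ x ?_
  · intro h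
    apply hx1
    have : x ∈ Subgroup.normalClosure {x} := Subgroup.subset_normalClosure rfl
    rw [h] at this; simpa using this
  · intro n hn
    have hn' := hNI hn
    refine ⟨hcl 1 hall0 n hn, hcl ρ (hall x hx) n hn, hcl (ρ * ρ) hall2 n hn, hcomm _ _ hx hn', ?_, ?_⟩
    · rw [← srr]; exact hcomm _ _ hx (hr _ (hr _ hn'))
    · rw [← sr]; exact hcomm _ _ hx (hr _ hn')

theorem core {G : Type*} [Group G] {σ ρ : MulAut G} (hss : IsSTrialitySimple G σ ρ)
    (s : ∀ x, σ (σ x) = x) (r : ∀ x, ρ (ρ (ρ x)) = x)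
    (sr : ∀ x, σ (ρ x) = ρ (ρ (σ x))) (srr : ∀ x, σ (ρ (ρ x)) = ρ (σ x))
    (hnc : ∃ x y : G, x * y ≠ y * x)
    (ht : ∀ g : G, (g⁻¹ * σ g) * ρ (g⁻¹ * σ g) * ρ (ρ (g⁻¹ * σ g)) = 1)
    (N : Subgroup G) (hN : N.Normal) (hne : N ≠ ⊤) (x : G) (hx : x ∈ N) (hx1 : ρ x ∈ N)
    (hx2 : ρ (ρ x) ∈ N) : x = 1 := by
  let I : Subgroup G := N ⊓ (N.comap ρ.toMonoidHom ⊓ N.comap (ρ * ρ : MulAut G).toMonoidHom)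
  have hmem : ∀ x, x ∈ I ↔ x ∈ N ∧ ρ x ∈ N ∧ ρ (ρ x) ∈ N := fun x => Iff.rfl
  have hI : I.Normal := inferInstance
  have hIr : ∀ x ∈ I, ρ x ∈ I := by
    intro x hx
    rw [hmem] at *
    simp only [r]; tauto
  have hIc : (I ⊓ I.comap σ.toMonoidHom).Normal := inferInstance
  have hJ : ∀ x, x ∈ I ⊓ I.comap σ.toMonoidHom ↔ x ∈ I ∧ σ x ∈ I := fun x => Iff.rfl
  rcases hss (I ⊓ I.comap σ.toMonoidHom) hIc
    (by intro n; rw [hJ, hJ, s]; tauto)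
    (by intro n; rw [hJ, hJ, sr]; exact fun h => ⟨hIr _ h.1, hIr _ (hIr _ h.2)⟩) with h | h
  · refine two hss s r sr srr hnc ht I hI hIr ?_ x ((hmem x).2 ⟨hx, hx1, hx2⟩)
    intro x h1 h2
    have := (hJ x).2 ⟨h1, h2⟩
    rw [h] at this; simpa using this
  · exfalso
    apply hne
    rw [eq_top_iff, ← h]
    exact fun x hx => hx.1.1

theorem getN {G : Type*} [Group G] {σ ρ : MulAut G} (hss : IsSTrialitySimple G σ ρ)
    (s : ∀ x, σ (σ x) = x) (r : ∀ x, ρ (ρ (ρ x)) = x)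
    (sr : ∀ x, σ (ρ x) = ρ (ρ (σ x))) (srr : ∀ x, σ (ρ (ρ x)) = ρ (σ x))
    (hnc : ∃ x y : G, x * y ≠ y * x)
    (ht : ∀ g : G, (g⁻¹ * σ g) * ρ (g⁻¹ * σ g) * ρ (ρ (g⁻¹ * σ g)) = 1)
    (N : Subgroup G) (hN : N.Normal) (hne : N ≠ ⊤) (hne' : N ≠ ⊥) :
    ∃ N : Subgroup G, N.Normal ∧ N ≠ ⊥ ∧ ∀ x ∈ N, ρ x ∈ N → x = 1 := by
  by_cases h : N ⊓ N.comap ρ.toMonoidHom = ⊥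
  · refine ⟨N, hN, hne', fun x h1 h2 => ?_⟩
    have : x ∈ N ⊓ N.comap ρ.toMonoidHom := ⟨h1, h2⟩
    rw [h] at this; simpa using this
  · exact ⟨_, inferInstance, h, fun x h1 h2 =>
      core hss s r sr srr hnc ht N hN hne x h1.1 h1.2 h2.2⟩

theorem getM {G : Type*} [Group G] {σ ρ : MulAut G} (hss : IsSTrialitySimple G σ ρ)
    (s : ∀ x, σ (σ x) = x) (r : ∀ x, ρ (ρ (ρ x)) = x)
    (sr : ∀ x, σ (ρ x) = ρ (ρ (σ x))) (srr : ∀ x, σ (ρ (ρ x)) = ρ (σ x))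
    (hnc : ∃ x y : G, x * y ≠ y * x)
    (ht : ∀ g : G, (g⁻¹ * σ g) * ρ (g⁻¹ * σ g) * ρ (ρ (g⁻¹ * σ g)) = 1)
    (N : Subgroup G) (hN : N.Normal) (hne' : N ≠ ⊥) (hd : ∀ x ∈ N, ρ x ∈ N → x = 1) :
    ∃ M : Subgroup G, M.Normal ∧ M ≠ ⊥ ∧ (∀ x ∈ M, σ x ∈ M) ∧ ∀ x ∈ M, ρ x ∈ M → x = 1 := by
  by_contra hcon
  have key : ∀ R : Subgroup G, R.Normal → (∀ x ∈ R, ρ x ∈ R → x = 1) →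
      ∀ x ∈ R, σ x ∈ R → x = 1 := by
    intro R hR hRd x h1 h2
    have hb : R ⊓ R.comap σ.toMonoidHom = ⊥ := by
      by_contra hb
      refine hcon ⟨R ⊓ R.comap σ.toMonoidHom, inferInstance, hb, fun x hx => ?_, fun x h1 h2 =>
        hRd x h1.1 h2.1⟩
      refine ⟨hx.2, ?_⟩
      have : σ (σ x) ∈ R := by rw [s]; exact hx.1
      exact this
    have : x ∈ R ⊓ R.comap σ.toMonoidHom := ⟨h1, h2⟩
    rw [hb] at this; simpa using this
  have k0 := key N hN hd
  have k1 : ∀ x ∈ N, ρ (σ x) ∈ N → x = 1 := by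
    intro x h1 h2
    have := key (N.comap (ρ * ρ : MulAut G).toMonoidHom) inferInstance (by
      intro x h1 h2
      have h1 : ρ (ρ x) ∈ N := h1
      have h2 : ρ (ρ (ρ x)) ∈ N := h2
      simpa using hd _ h1 h2) (ρ x)
      (by show ρ (ρ (ρ x)) ∈ N; rwa [r])
      (by show ρ (ρ (σ (ρ x))) ∈ N; rwa [sr, r])
    simpa using this
  have k2 : ∀ x ∈ N, ρ (ρ (σ x)) ∈ N → x = 1 := by
    intro x h1 h2
    have := key (N.comap ρ.toMonoidHom) inferInstance (by
      intro x h1 h2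
      have h1 : ρ x ∈ N := h1
      have h2 : ρ (ρ x) ∈ N := h2
      simpa using hd _ h1 h2) (ρ (ρ x))
      (by show ρ (ρ (ρ x)) ∈ N; rwa [r])
      (by show ρ (σ (ρ (ρ x))) ∈ N; rwa [srr])
    simpa using this
  have hd2 : ∀ x ∈ N, ρ (ρ x) ∈ N → x = 1 := by
    intro x h1 h2
    simpa using hd _ h2 (by rwa [r])
  have cm : ∀ τ ω : MulAut G, (∀ x, τ (ω x) = x) → (∀ x ∈ N, τ x ∈ N → x = 1) →
      ∀ z n, z ∈ N → n ∈ N → Commute z (ω n) := by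
    intro τ ω hto h z n hz hn
    refine disj_comm N (N.comap τ.toMonoidHom) hN inferInstance (fun x hx h' => h x hx h') z _ hz ?_
    show τ (ω n) ∈ N
    rwa [hto]
  have c1 := cm (ρ * ρ) ρ r hd2
  have c2 := cm ρ (ρ * ρ) r hd
  have c3 := cm σ σ s k0
  have c4 := cm (ρ * σ) (ρ * σ) (fun x => by simp [sr, s, r]) k1
  have c5 := cm (ρ * ρ * σ) (ρ * ρ * σ) (fun x => by simp [sr, s, r]) k2
  simp only [MulAut.mul_apply] at c1 c2 c3 c4 c5
  apply hne'
  rw [Subgroup.eq_bot_iff_forall]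
  intro z hz
  refine comm_bot hss s r sr srr hnc N hN hne' z fun n hn =>
    ⟨?_, c1 _ _ hz hn, c2 _ _ hz hn, c3 _ _ hz hn, c4 _ _ hz hn, c5 _ _ hz hn⟩
  have h1 := ht n
  simp only [map_mul, map_inv] at h1
  have h2 : n = σ n * ((ρ n)⁻¹ * ρ (σ n)) * ((ρ (ρ n))⁻¹ * ρ (ρ (σ n))) := by
    rw [mul_assoc, mul_assoc, inv_mul_eq_one] at h1
    conv_lhs => rw [h1]
    group
  rw [h2]
  exact ((c3 _ _ hz hn).mul_right ((c1 _ _ hz hn).inv_right.mul_right (c4 _ _ hz hn))).mul_right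
    ((c2 _ _ hz hn).inv_right.mul_right (c5 _ _ hz hn))

theorem final {G : Type u} [Group G] {σ ρ : MulAut G} (hss : IsSTrialitySimple G σ ρ)
    (s : ∀ x, σ (σ x) = x) (r : ∀ x, ρ (ρ (ρ x)) = x)
    (sr : ∀ x, σ (ρ x) = ρ (ρ (σ x))) (srr : ∀ x, σ (ρ (ρ x)) = ρ (σ x))
    (hnc : ∃ x y : G, x * y ≠ y * x)
    (ht : ∀ g : G, (g⁻¹ * σ g) * ρ (g⁻¹ * σ g) * ρ (ρ (g⁻¹ * σ g)) = 1)
    (M : Subgroup G) (hM : M.Normal) (hne : M ≠ ⊥) (hs : ∀ x ∈ M, σ x ∈ M)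
    (hd : ∀ x ∈ M, ρ x ∈ M → x = 1) :
    ∃ (A : Type u) (_ : Group A), IsSimpleGroup A ∧
        ∃ e : G ≃* A × A × A,
          (∀ g : G, e (ρ g) = ((e g).2.2, (e g).1, (e g).2.1)) ∧
          (∀ g : G, e (σ g) = ((e g).1, (e g).2.2, (e g).2.1)) := by
  have hd2 : ∀ x ∈ M, ρ (ρ x) ∈ M → x = 1 := by
    intro x h1 h2
    simpa using hd _ h2 (by rwa [r])
  have cm : ∀ τ ω : MulAut G, (∀ x, τ (ω x) = x) → (∀ x ∈ M, τ x ∈ M → x = 1) →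
      ∀ z n, z ∈ M → n ∈ M → Commute z (ω n) := by
    intro τ ω hto h z n hz hn
    refine disj_comm M (M.comap τ.toMonoidHom) hM inferInstance (fun x hx h' => h x hx h') z _ hz ?_
    show τ (ω n) ∈ M
    rwa [hto]
  have c1 := cm (ρ * ρ) ρ r hd2
  have c2 := cm ρ (ρ * ρ) r hd
  simp only [MulAut.mul_apply] at c1 c2
  have c3 : ∀ a b, a ∈ M → b ∈ M → Commute (ρ a) (ρ (ρ b)) := fun a b ha hb =>
    (c1 a b ha hb).map ρ
  -- injectivity on elements
  have inj : ∀ a ∈ M, ∀ b ∈ M, ∀ c ∈ M, a * ρ b * ρ (ρ c) = 1 → a = 1 ∧ b = 1 ∧ c = 1 := by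
    intro a ha b hb c hc h
    have ha1 : a = 1 := by
      have e : a = (ρ b * ρ (ρ c))⁻¹ := by
        rw [mul_assoc] at h; exact mul_eq_one_iff_eq_inv.1 h
      refine comm_bot hss s r sr srr hnc M hM hne a fun n hn => ?_
      have hsn := hs n hn
      refine ⟨?_, c1 _ _ ha hn, c2 _ _ ha hn, ?_, c1 _ _ ha hsn, c2 _ _ ha hsn⟩
      · rw [e]; exact ((c1 _ _ hn hb).mul_right (c2 _ _ hn hc)).inv_right.symm
      · rw [e]; exact ((c1 _ _ hsn hb).mul_right (c2 _ _ hsn hc)).inv_right.symm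
    subst ha1
    rw [one_mul, ← map_mul, EmbeddingLike.map_eq_one_iff] at h
    have hc1 : c = 1 := by
      apply hd _ hc
      rw [mul_eq_one_iff_inv_eq.1 h |>.symm]; exact M.inv_mem hb
    subst hc1
    simpa using h
  have hfix : ∀ g ∈ M, σ g = g := by
    intro g hg
    have hu := M.mul_mem (M.inv_mem hg) (hs g hg)
    have := (inj _ hu _ hu _ hu (ht g)).1
    exact (inv_mul_eq_one.1 this).symm
  let f : M × M × M →* G :=
    { toFun := fun p => (p.1 : G) * ρ p.2.1 * ρ (ρ p.2.2)
      map_one' := by simp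
      map_mul' := by
        rintro ⟨⟨a, ha⟩, ⟨b, hb⟩, ⟨c, hc⟩⟩ ⟨⟨a', ha'⟩, ⟨b', hb'⟩, ⟨c', hc'⟩⟩
        simp only [Prod.mk_mul_mk, MulMemClass.mk_mul_mk, map_mul]
        have e1 := (c1 a' b ha' hb).eq
        have e2 : a' * ρ b' * ρ (ρ c) = ρ (ρ c) * (a' * ρ b') :=
          ((c2 a' c ha' hc).mul_left (c3 b' c hb' hc)).eq
        calc a * a' * (ρ b * ρ b') * (ρ (ρ c) * ρ (ρ c'))
            = a * (a' * ρ b) * ρ b' * ρ (ρ c) * ρ (ρ c') := by group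
          _ = a * ρ b * (a' * ρ b' * ρ (ρ c)) * ρ (ρ c') := by rw [e1]; group
          _ = _ := by rw [e2]; group }
  have hf : ∀ p, f p = (p.1 : G) * ρ p.2.1 * ρ (ρ p.2.2) := fun _ => rfl
  have finj : Function.Injective f := by
    rw [injective_iff_map_eq_one]
    rintro ⟨⟨a, ha⟩, ⟨b, hb⟩, ⟨c, hc⟩⟩ h
    obtain ⟨rfl, rfl, rfl⟩ := inj a ha b hb c hc h
    rfl
  -- the products over an arbitrary normal subgroup inside M
  have prodtop : ∀ K : Subgroup M, (K.map M.subtype).Normal → K ≠ ⊥ →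
      ((K.prod (K.prod K)).map f) = ⊤ := by
    intro K hK hKne
    refine gen hss s r sr srr (K.map M.subtype) hK ?_ _ ?_
    · intro h
      exact hKne ((Subgroup.map_eq_bot_iff_of_injective _ M.subtype_injective).1 h)
    · rintro _ ⟨n, hn, rfl⟩
      simp only [Subgroup.coe_subtype, hfix n n.2]
      have m1 : (n : G) ∈ (K.prod (K.prod K)).map f :=
        ⟨(n, 1, 1), ⟨hn, K.one_mem, K.one_mem⟩, by simp [hf]⟩
      have m2 : ρ (n : G) ∈ (K.prod (K.prod K)).map f :=
        ⟨(1, n, 1), ⟨K.one_mem, hn, K.one_mem⟩, by simp [hf]⟩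
      have m3 : ρ (ρ (n : G)) ∈ (K.prod (K.prod K)).map f :=
        ⟨(1, 1, n), ⟨K.one_mem, K.one_mem, hn⟩, by simp [hf]⟩
      exact ⟨m1, m2, m3, m1, m2, m3⟩
  have hnt : Nontrivial M := (Subgroup.nontrivial_iff_ne_bot M).2 hne
  have fsurj : Function.Surjective f := by
    intro g
    have h := prodtop ⊤ (by
      rw [← MonoidHom.range_eq_map, Subgroup.range_subtype]; exact hM) top_ne_bot
    have hg : g ∈ ((⊤ : Subgroup M).prod ((⊤ : Subgroup M).prod ⊤)).map f := by rw [h]; trivial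
    obtain ⟨p, -, hp⟩ := hg
    exact ⟨p, hp⟩
  let E : M × M × M ≃* G := MulEquiv.ofBijective f ⟨finj, fsurj⟩
  have hE : ∀ p, E p = (p.1 : G) * ρ p.2.1 * ρ (ρ p.2.2) := fun _ => rfl
  refine ⟨M, inferInstance, ?_, E.symm, ?_, ?_⟩
  · refine { exists_pair_ne := hnt.exists_pair_ne, eq_bot_or_eq_top_of_normal := fun K hK => ?_ }
    by_cases hb : K = ⊥
    · exact Or.inl hb
    right
    have hKG : (K.map M.subtype).Normal := by
      refine ⟨?_⟩
      rintro _ ⟨n, hn, rfl⟩ g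
      obtain ⟨⟨a, b, c⟩, rfl⟩ := fsurj g
      refine ⟨a * n * a⁻¹, hK.conj_mem n hn a, ?_⟩
      have e : Commute (n : G) (ρ (b : G) * ρ (ρ (c : G))) :=
        (c1 _ _ n.2 b.2).mul_right (c2 _ _ n.2 c.2)
      simp only [hf, Subgroup.coe_subtype, Subgroup.coe_mul, Subgroup.coe_inv]
      symm
      calc (a : G) * ρ b * ρ (ρ c) * n * ((a : G) * ρ b * ρ (ρ c))⁻¹
          = a * ((ρ b * ρ (ρ c)) * n) * (ρ b * ρ (ρ c))⁻¹ * (a : G)⁻¹ := by group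
        _ = _ := by rw [← e.eq]; group
    have h := prodtop K hKG hb
    rw [eq_top_iff]
    intro m _
    have hm : f (m, 1, 1) ∈ (K.prod (K.prod K)).map f := by rw [h]; trivial
    obtain ⟨p, hp, hpm⟩ := hm
    have := finj hpm
    rw [this] at hp
    exact hp.1
  · intro g
    obtain ⟨⟨⟨a, ha⟩, ⟨b, hb⟩, ⟨c, hc⟩⟩, rfl⟩ := E.surjective g
    rw [MulEquiv.symm_apply_eq]
    simp only [MulEquiv.symm_apply_apply]
    simp only [hE, map_mul, r]
    rw [← ((c1 c a hc ha).mul_right (c2 c b hc hb)).eq, mul_assoc]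
  · intro g
    obtain ⟨⟨⟨a, ha⟩, ⟨b, hb⟩, ⟨c, hc⟩⟩, rfl⟩ := E.surjective g
    rw [MulEquiv.symm_apply_eq]
    simp only [MulEquiv.symm_apply_apply]
    simp only [hE, map_mul, sr, r, hfix a ha, hfix b hb, hfix c hc]
    rw [mul_assoc, mul_assoc, (c3 c b hc hb).eq]

end TrialityAux

/-- Classification of noncommutative `S`-simple groups with triality (Doro;
Nagy–Valsecchi): either `G` is simple, or `G = A × A × A` with `A` simple and the
triality automorphisms acting by `(a,b,c)^ρ = (c,a,b)` and `(a,b,c)^σ = (a,c,b)`. -/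
theorem ssimple_group_with_triality_classification {G : Type u} [Group G]
    (σ ρ : MulAut G) (ht : IsGroupWithTriality G σ ρ)
    (hnc : ∃ x y : G, x * y ≠ y * x)
    (hss : IsSTrialitySimple G σ ρ) :
    IsSimpleGroup G ∨
      ∃ (A : Type u) (_ : Group A), IsSimpleGroup A ∧
        ∃ e : G ≃* A × A × A,
          (∀ g : G, e (ρ g) = ((e g).2.2, (e g).1, (e g).2.1)) ∧
          (∀ g : G, e (σ g) = ((e g).1, (e g).2.2, (e g).2.1)) := by
  have s : ∀ x, σ (σ x) = x := fun x => by
    simpa [pow_two] using DFunLike.congr_fun ht.sigma_sq x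
  have r : ∀ x, ρ (ρ (ρ x)) = x := fun x => by
    simpa [pow_succ] using DFunLike.congr_fun ht.rho_cube x
  have q : ∀ x, σ (ρ (σ (ρ x))) = x := fun x => by
    simpa [pow_two] using DFunLike.congr_fun ht.sigma_rho_sq x
  have sr : ∀ x, σ (ρ x) = ρ (ρ (σ x)) := fun x => by
    have h := congrArg (fun y => ρ (ρ (σ y))) (q x)
    simpa [s, r] using h
  have srr : ∀ x, σ (ρ (ρ x)) = ρ (σ x) := fun x => by
    rw [sr, sr, r]
  by_cases hsimp : ∀ N : Subgroup G, N.Normal → N = ⊥ ∨ N = ⊤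
  · left
    obtain ⟨x, y, hxy⟩ := hnc
    exact { exists_pair_ne := ⟨_, _, hxy⟩, eq_bot_or_eq_top_of_normal := hsimp }
  · right
    push Not at hsimp
    obtain ⟨N, hN, h1, h2⟩ := hsimp
    obtain ⟨N', hN', hb, hd⟩ :=
      TrialityAux.getN hss s r sr srr hnc ht.triality N hN h2 h1
    obtain ⟨M, hM, hb, hs, hd⟩ :=
      TrialityAux.getM hss s r sr srr hnc ht.triality N' hN' hb hd
    exact TrialityAux.final hss s r sr srr hnc ht.triality M hM hb hs hd
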